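/- Let i ≤ k be positive integers, A : 𝓢(ℝ^i) → 𝓢'(ℝ^i) continuous linear, ℓ : {1,…,i} → {1,…,k} injective, and let A_{(ℓ)} : 𝓢(ℝ^k) → 𝓢'(ℝ^k) be the unique continuous linear map satisfying the pure-tensor characterization A_{(ℓ)}(f₁⊗⋯⊗f_k)(g₁⊗⋯⊗g_k) = A(f_{ℓ(1)}⊗⋯⊗f_{ℓ(i)})(g_{ℓ(1)}⊗⋯⊗g_{ℓ(i)}) · ∏_{m ∉ range(ℓ)} ∫ f_m g_m. Then for every permutation π ∈ S_k (acting on Schwartz functions by (π·f)(x₁,…,x_k) = f(x_{π(1)},…,x_{π(k)}) and on tempered distributions by (π·u)(g) = u(π⁻¹·g)), the conjugated operator π ∘ A_{(ℓ)} ∘ π⁻¹ equals A_{(π∘ℓ)}, the unique extension associated with the injection π ∘ ℓ. -/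

import Mathlib

open MeasureTheory SchwartzMap

/-- Distribution-valued operators on `ℝ^n`: continuous linear maps `𝓢(ℝ^n) → 𝓢'(ℝ^n)`. -/
abbrev DVO (n : ℕ) : Type :=
  SchwartzMap (Fin n → ℝ) ℂ →L[ℂ] (SchwartzMap (Fin n → ℝ) ℂ →L[ℂ] ℂ)

/-- The continuous linear equivalence on `ℝ^k` permuting coordinates: `x ↦ x ∘ π`. -/
noncomputable def permCLE (k : ℕ) (π : Equiv.Perm (Fin k)) : (Fin k → ℝ) ≃L[ℝ] (Fin k → ℝ) :=
  (LinearEquiv.funCongrLeft ℝ ℝ π).toContinuousLinearEquiv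

/-- The action of a permutation `π` on Schwartz functions on `ℝ^k`:
`(π · f)(x₁,…,x_k) = f(x_{π(1)},…,x_{π(k)})`, i.e. `f ↦ (x ↦ f (x ∘ π))`. -/
noncomputable def permCLM (k : ℕ) (π : Equiv.Perm (Fin k)) :
    SchwartzMap (Fin k → ℝ) ℂ →L[ℂ] SchwartzMap (Fin k → ℝ) ℂ :=
  SchwartzMap.compCLMOfContinuousLinearEquiv ℂ (permCLE k π)

/-- `F ∈ 𝓢(ℝ^n)` is the pure tensor `f₁ ⊗ ⋯ ⊗ f_n` of the one-dimensional Schwartz functions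
`f₁, …, f_n`. -/
def IsTensor {n : ℕ} (f : Fin n → SchwartzMap ℝ ℂ) (F : SchwartzMap (Fin n → ℝ) ℂ) : Prop :=
  ∀ x : Fin n → ℝ, F x = ∏ m, f m (x m)

/-- `E` is the `k`-particle extension `A_{(ℓ(1),…,ℓ(i))}` of the `i`-particle operator `A`. -/
def IsExtension (i k : ℕ) (A : DVO i) (ℓ : Fin i → Fin k) (E : DVO k) : Prop :=
  ∀ (f g : Fin k → SchwartzMap ℝ ℂ)
    (F G : SchwartzMap (Fin k → ℝ) ℂ) (F' G' : SchwartzMap (Fin i → ℝ) ℂ),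
    IsTensor f F → IsTensor g G →
    IsTensor (fun a => f (ℓ a)) F' → IsTensor (fun a => g (ℓ a)) G' →
    E F G = A F' G' * ∏ m ∈ Finset.univ \ Finset.image ℓ Finset.univ, ∫ x : ℝ, f m x * g m x

/-!
Pure tensors with compactly supported factors span a dense subspace of `𝓢(ℝ^k)`. Truncation and
dilation reduce this to an `f` supported in `[-1/4, 1/4]^k`. The Fourier series of the periodization
of `f`, multiplied by a product cutoff, is a series of pure tensors, and it converges to `f` in
`𝓢(ℝ^k)` because the coefficients decay rapidly while each seminorm of the `n`-th character times
the cutoff grows polynomially in `n`. Hence the values on pure tensors determine an extension. The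
conjugate `π ∘ A_{(ℓ)} ∘ π⁻¹` has the values required of `A_{(π∘ℓ)}`, since `π` maps the complement
of `range ℓ` onto the complement of `range (π ∘ ℓ)`.
-/

open Filter Topology
open scoped ContDiff FourierTransform

/-! ### Series, multipliers and truncation in the Schwartz space -/

section SchwartzTopology

variable {ι 𝕜 E F : Type*} [RCLike 𝕜] [NormedAddCommGroup E] [NormedSpace ℝ E]
  [NormedAddCommGroup F] [NormedSpace ℝ F] [NormedSpace 𝕜 F] [SMulCommClass ℝ 𝕜 F]

variable (𝕜) in
theorem seminorm_le_tsum_seminorm [CompleteSpace F] {u : ι → 𝓢(E, F)} {f : 𝓢(E, F)}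
    (hp : ∀ x, HasSum (fun n => u n x) (f x))
    (hs : ∀ a b : ℕ, Summable fun n => SchwartzMap.seminorm 𝕜 a b (u n)) (a b : ℕ) :
    SchwartzMap.seminorm 𝕜 a b f ≤ ∑' n, SchwartzMap.seminorm 𝕜 a b (u n) := by
  refine SchwartzMap.seminorm_le_bound 𝕜 a b f (tsum_nonneg fun _ => apply_nonneg _ _) fun x => ?_
  have hf : (f : E → F) = fun y => ∑' n, u n y := funext fun y => (hp y).tsum_eq.symm
  have hn : Summable fun n => ‖iteratedFDeriv ℝ b (u n) x‖ :=
    .of_nonneg_of_le (fun _ => norm_nonneg _)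
      (fun n => SchwartzMap.norm_iteratedFDeriv_le_seminorm 𝕜 (u n) b x) (hs 0 b)
  rw [hf, iteratedFDeriv_tsum_apply (N := b) (fun n => (u n).smooth _) (fun j _ => hs 0 j)
    (fun j n y _ => SchwartzMap.norm_iteratedFDeriv_le_seminorm 𝕜 (u n) j y) le_rfl]
  calc ‖x‖ ^ a * ‖∑' n, iteratedFDeriv ℝ b (u n) x‖
      ≤ ‖x‖ ^ a * ∑' n, ‖iteratedFDeriv ℝ b (u n) x‖ := by
        gcongr
        exact norm_tsum_le_tsum_norm hn
    _ = ∑' n, ‖x‖ ^ a * ‖iteratedFDeriv ℝ b (u n) x‖ := tsum_mul_left.symm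
    _ ≤ ∑' n, SchwartzMap.seminorm 𝕜 a b (u n) :=
        (hn.mul_left _).tsum_le_tsum (fun n => SchwartzMap.le_seminorm 𝕜 a b (u n) x) (hs a b)

theorem hasSum_of_summable_seminorm [CompleteSpace F] {u : ι → 𝓢(E, F)} {f : 𝓢(E, F)}
    (hp : ∀ x, HasSum (fun n => u n x) (f x))
    (hs : ∀ a b : ℕ, Summable fun n => SchwartzMap.seminorm 𝕜 a b (u n)) : HasSum u f := by
  rw [HasSum, (schwartz_withSeminorms 𝕜 E F).tendsto_nhds]
  rintro ⟨a, b⟩ ε hε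
  rw [SummationFilter.unconditional_filter]
  filter_upwards [(tendsto_tsum_compl_atTop_zero
    fun n => SchwartzMap.seminorm 𝕜 a b (u n)).eventually (gt_mem_nhds hε)] with s hsε
  rw [SchwartzMap.schwartzSeminormFamily_apply, map_sub_rev]
  have htail : ∀ x, HasSum (fun n : {n // n ∉ s} => u n x) ((f - ∑ n ∈ s, u n) x) := fun x => by
    refine (s.hasSum_compl_iff (f := fun n => u n x)).2 ?_
    simpa using hp x
  exact (seminorm_le_tsum_seminorm 𝕜 htail (fun a b => (hs a b).subtype _) a b).trans_lt hsε

theorem seminorm_le_of_eqOn_ball_zero {f : 𝓢(E, F)} {R : ℝ} (hR : 0 < R)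
    (hf : Set.EqOn f 0 (Metric.ball 0 R)) (a b : ℕ) :
    SchwartzMap.seminorm 𝕜 a b f ≤ R⁻¹ * SchwartzMap.seminorm 𝕜 (a + 1) b f := by
  refine SchwartzMap.seminorm_le_bound 𝕜 a b f (by positivity) fun x => ?_
  rcases lt_or_ge ‖x‖ R with hx | hx
  · have hx0 : (f : E → F) =ᶠ[𝓝 x] 0 :=
      hf.eventuallyEq_of_mem (Metric.isOpen_ball.mem_nhds (by simpa using hx))
    rw [(hx0.iteratedFDeriv ℝ b).eq_of_nhds, iteratedFDeriv_zero, Pi.zero_apply, norm_zero,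
      mul_zero]
    positivity
  · rw [inv_mul_eq_div, le_div_iff₀' hR]
    calc R * (‖x‖ ^ a * ‖iteratedFDeriv ℝ b f x‖)
        ≤ ‖x‖ * (‖x‖ ^ a * ‖iteratedFDeriv ℝ b f x‖) := by gcongr
      _ = ‖x‖ ^ (a + 1) * ‖iteratedFDeriv ℝ b f x‖ := by ring
      _ ≤ SchwartzMap.seminorm 𝕜 (a + 1) b f := SchwartzMap.le_seminorm 𝕜 (a + 1) b f x

variable (𝕜) in
theorem tendsto_of_eqOn_ball_of_seminorm_le {l : Filter ι} {v : ι → 𝓢(E, F)} {f : 𝓢(E, F)}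
    {r : ι → ℝ} (hr : Tendsto r l atTop) (hv : ∀ n, Set.EqOn (v n) f (Metric.ball 0 (r n)))
    {M : ℕ → ℕ → ℝ} (hM : ∀ a b n, SchwartzMap.seminorm 𝕜 a b (v n) ≤ M a b) :
    Tendsto v l (𝓝 f) := by
  rw [(schwartz_withSeminorms 𝕜 E F).tendsto_nhds]
  rintro ⟨a, b⟩ ε hε
  have hlim : Tendsto (fun n => (r n)⁻¹ * (M (a + 1) b + SchwartzMap.seminorm 𝕜 (a + 1) b f))
      l (𝓝 0) := by
    simpa using hr.inv_tendsto_atTop.mul_const _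
  filter_upwards [hlim.eventually (gt_mem_nhds hε), hr.eventually_gt_atTop 0] with n hnε hn
  have hzero : Set.EqOn (v n - f : 𝓢(E, F)) 0 (Metric.ball 0 (r n)) :=
    fun x hx => sub_eq_zero.2 (hv n hx)
  calc SchwartzMap.seminorm 𝕜 a b (v n - f)
      ≤ (r n)⁻¹ * SchwartzMap.seminorm 𝕜 (a + 1) b (v n - f) :=
        seminorm_le_of_eqOn_ball_zero hn hzero a b
    _ ≤ (r n)⁻¹ * (M (a + 1) b + SchwartzMap.seminorm 𝕜 (a + 1) b f) := by
        gcongr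
        exact (map_sub_le_add _ _ _).trans (by gcongr; exact hM _ _ _)
    _ < ε := hnε

theorem norm_iteratedFDeriv_comp_continuousLinearMap_le {G : Type*} [NormedAddCommGroup G]
    [NormedSpace ℝ G] {h : E → F} {j : ℕ} (hh : ContDiff ℝ j h) (L : G →L[ℝ] E) (x : G) :
    ‖iteratedFDeriv ℝ j (fun y => h (L y)) x‖ ≤ ‖iteratedFDeriv ℝ j h (L x)‖ * ‖L‖ ^ j := by
  have hcomp := L.iteratedFDeriv_comp_right hh x le_rfl
  rw [Function.comp_def] at hcomp
  rw [hcomp]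
  simpa using (iteratedFDeriv ℝ j h (L x)).norm_compContinuousLinearMap_le fun _ => L

theorem seminorm_smulLeftCLM_le {h : E → 𝕜} (hh : h.HasTemperateGrowth) {B : ℕ → ℝ}
    (hB : ∀ j x, ‖iteratedFDeriv ℝ j h x‖ ≤ B j) (f : 𝓢(E, F)) (a b : ℕ) :
    SchwartzMap.seminorm 𝕜 a b (smulLeftCLM F h f) ≤
      ∑ j ∈ Finset.range (b + 1), b.choose j * B j * SchwartzMap.seminorm 𝕜 a (b - j) f := by
  have hB0 : ∀ j, 0 ≤ B j := fun j => (norm_nonneg _).trans (hB j 0)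
  refine SchwartzMap.seminorm_le_bound 𝕜 a b _
    (Finset.sum_nonneg fun j _ => by have := hB0 j; positivity) fun x => ?_
  rw [smulLeftCLM_apply hh]
  calc ‖x‖ ^ a * ‖iteratedFDeriv ℝ b (fun y => h y • f y) x‖
      ≤ ‖x‖ ^ a * ∑ j ∈ Finset.range (b + 1), b.choose j * ‖iteratedFDeriv ℝ j h x‖ *
          ‖iteratedFDeriv ℝ (b - j) f x‖ := by
        gcongr
        exact norm_iteratedFDeriv_smul_le hh.1 (f.smooth ⊤) x (mod_cast le_top)
    _ = ∑ j ∈ Finset.range (b + 1), b.choose j * ‖iteratedFDeriv ℝ j h x‖ *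
          (‖x‖ ^ a * ‖iteratedFDeriv ℝ (b - j) f x‖) := by
        rw [Finset.mul_sum]
        exact Finset.sum_congr rfl fun _ _ => by ring
    _ ≤ _ := by
        gcongr with j
        · exact mul_nonneg (Nat.cast_nonneg _) (hB0 j)
        · exact hB j x
        · exact SchwartzMap.le_seminorm 𝕜 a (b - j) f x

end SchwartzTopology

section CompactSupport

variable {E F : Type*} [NormedAddCommGroup E] [NormedSpace ℝ E] [NormedAddCommGroup F]
  [NormedSpace ℝ F] [FiniteDimensional ℝ E]

variable (E) in
theorem exists_cutoff_norm_iteratedFDeriv_le : ∃ B : ℕ → ℝ, ∀ R : ℝ, 1 ≤ R → ∃ h : E → ℝ,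
    ContDiff ℝ ∞ h ∧ HasCompactSupport h ∧ Set.EqOn h 1 (Metric.ball 0 R) ∧
      ∀ j x, ‖iteratedFDeriv ℝ j h x‖ ≤ B j := by
  let χ : ContDiffBump (0 : E) := ⟨1, 2, one_pos, one_lt_two⟩
  let U : 𝓢(E, ℝ) := χ.hasCompactSupport.toSchwartzMap χ.contDiff
  refine ⟨fun j => SchwartzMap.seminorm ℝ 0 j U, fun R hR => ?_⟩
  have hR0 : 0 < R := one_pos.trans_le hR
  let L : E →L[ℝ] E := R⁻¹ • ContinuousLinearMap.id ℝ E
  have hL : ‖L‖ ≤ 1 := L.opNorm_le_bound zero_le_one fun x => by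
    simpa [L, norm_smul, abs_of_pos hR0] using
      mul_le_of_le_one_left (norm_nonneg x) (inv_le_one_of_one_le₀ hR)
  refine ⟨fun x => χ (L x), χ.contDiff.comp L.contDiff,
    χ.hasCompactSupport.comp_homeomorph (.smulOfNeZero R⁻¹ (inv_ne_zero hR0.ne')),
    fun x hx => χ.one_of_mem_closedBall ?_, fun j x => ?_⟩
  · rw [mem_ball_zero_iff] at hx
    simpa [L, χ, norm_smul, abs_of_pos hR0] using (inv_mul_le_iff₀ hR0).2 (by simpa using hx.le)
  · calc ‖iteratedFDeriv ℝ j (fun x => χ (L x)) x‖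
        ≤ ‖iteratedFDeriv ℝ j χ (L x)‖ * ‖L‖ ^ j :=
          norm_iteratedFDeriv_comp_continuousLinearMap_le χ.contDiff L x
      _ ≤ ‖iteratedFDeriv ℝ j χ (L x)‖ :=
          mul_le_of_le_one_right (norm_nonneg _) (pow_le_one₀ (norm_nonneg _) hL)
      _ ≤ SchwartzMap.seminorm ℝ 0 j U := SchwartzMap.norm_iteratedFDeriv_le_seminorm ℝ U j _

theorem dense_hasCompactSupport : Dense {f : 𝓢(E, F) | HasCompactSupport f} := fun f => by
  obtain ⟨B, hB⟩ := exists_cutoff_norm_iteratedFDeriv_le E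
  choose h hcd hcs hone hbound using fun n : ℕ => hB (n + 1) (by simp)
  have hgrowth (n : ℕ) : (h n).HasTemperateGrowth := (hcs n).hasTemperateGrowth (hcd n)
  have htendsto : Tendsto (fun n => smulLeftCLM F (h n) f) atTop (𝓝 f) :=
    tendsto_of_eqOn_ball_of_seminorm_le ℝ
      (tendsto_atTop_add_const_right _ 1 tendsto_natCast_atTop_atTop)
      (fun n x hx => by simp [hgrowth n, hone n hx])
      (fun a b n => seminorm_smulLeftCLM_le (hgrowth n) (hbound n) f a b)
  refine mem_closure_of_tendsto htendsto (Eventually.of_forall fun n => ?_)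
  change HasCompactSupport (smulLeftCLM F (h n) f)
  rw [smulLeftCLM_apply (hgrowth n)]
  exact (hcs n).smul_right

end CompactSupport

/-! ### Modulations and rapid decay of Fourier transforms -/

section Modulation

theorem norm_iteratedFDeriv_fourierChar (j : ℕ) (t : ℝ) :
    ‖iteratedFDeriv ℝ j (fun s : ℝ => (𝐞 s : ℂ)) t‖ = (2 * Real.pi) ^ j := by
  have hderiv : ∀ j : ℕ, iteratedDeriv j (fun s : ℝ => (𝐞 s : ℂ)) =
      fun s => (2 * Real.pi * Complex.I) ^ j * (𝐞 s : ℂ) := fun j => by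
    induction j with
    | zero => simp
    | succ j ih =>
      funext s
      rw [iteratedDeriv_succ, ih, ((Real.hasDerivAt_fourierChar s).const_mul _).deriv]
      ring
  have hnorm : ‖(𝐞 t : ℂ)‖ = 1 := Circle.norm_coe _
  simp [norm_iteratedFDeriv_eq_norm_iteratedDeriv, hderiv, hnorm, abs_of_pos Real.pi_pos]

theorem contDiff_fourierChar : ContDiff ℝ ∞ fun s : ℝ => (𝐞 s : ℂ) := by
  simp only [Real.fourierChar_apply]
  have hlin : ContDiff ℝ ∞ fun s : ℝ => ((2 * Real.pi * s : ℝ) : ℂ) :=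
    Complex.ofRealCLM.contDiff.comp (contDiff_const.mul contDiff_id)
  exact (hlin.mul contDiff_const).cexp

variable {E F : Type*} [NormedAddCommGroup E] [NormedSpace ℝ E]
  [NormedAddCommGroup F] [NormedSpace ℂ F]

theorem norm_iteratedFDeriv_fourierChar_comp_le (L : E →L[ℝ] ℝ) (j : ℕ) (x : E) :
    ‖iteratedFDeriv ℝ j (fun y => (𝐞 (L y) : ℂ)) x‖ ≤ (2 * Real.pi * ‖L‖) ^ j := by
  rw [mul_pow, ← norm_iteratedFDeriv_fourierChar j (L x)]
  exact norm_iteratedFDeriv_comp_continuousLinearMap_le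
    (contDiff_fourierChar.of_le (mod_cast le_top)) L x

theorem hasTemperateGrowth_fourierChar_comp (L : E →L[ℝ] ℝ) :
    (fun x => (𝐞 (L x) : ℂ)).HasTemperateGrowth :=
  ⟨contDiff_fourierChar.comp L.contDiff, fun j => ⟨0, (2 * Real.pi * ‖L‖) ^ j, fun x => by
    simpa using norm_iteratedFDeriv_fourierChar_comp_le L j x⟩⟩

variable (F) in
/-- Multiplication of Schwartz functions by the character `x ↦ e^{2πi L(x)}`. -/
noncomputable def modulation (L : E →L[ℝ] ℝ) : 𝓢(E, F) →L[ℂ] 𝓢(E, F) :=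
  smulLeftCLM F fun x => (𝐞 (L x) : ℂ)

theorem modulation_apply (L : E →L[ℝ] ℝ) (f : 𝓢(E, F)) (x : E) :
    modulation F L f x = (𝐞 (L x) : ℂ) • f x :=
  smulLeftCLM_apply_apply (hasTemperateGrowth_fourierChar_comp L) f x

theorem hasCompactSupport_modulation (L : E →L[ℝ] ℝ) {f : 𝓢(E, F)} (hf : HasCompactSupport f) :
    HasCompactSupport (modulation F L f) :=
  hf.of_isClosed_subset (isClosed_tsupport _) fun _ hx => (tsupport_smulLeftCLM_subset _ f hx).1

theorem exists_seminorm_modulation_le (f : 𝓢(E, F)) (a b : ℕ) : ∃ C : ℝ, 0 ≤ C ∧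
    ∀ L : E →L[ℝ] ℝ, SchwartzMap.seminorm ℂ a b (modulation F L f) ≤ C * (1 + ‖L‖) ^ b := by
  refine ⟨∑ j ∈ Finset.range (b + 1),
    b.choose j * (2 * Real.pi) ^ j * SchwartzMap.seminorm ℂ a (b - j) f, by positivity, fun L => ?_⟩
  refine (seminorm_smulLeftCLM_le (hasTemperateGrowth_fourierChar_comp L)
    (norm_iteratedFDeriv_fourierChar_comp_le L) f a b).trans ?_
  rw [Finset.sum_mul]
  refine Finset.sum_le_sum fun j hj => ?_
  have hpow : ‖L‖ ^ j ≤ (1 + ‖L‖) ^ b :=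
    (pow_le_pow_left₀ (norm_nonneg L) (by simp) j).trans
      (pow_le_pow_right₀ (by simp) (Finset.mem_range_succ_iff.1 hj))
  calc b.choose j * (2 * Real.pi * ‖L‖) ^ j * SchwartzMap.seminorm ℂ a (b - j) f
      = b.choose j * (2 * Real.pi) ^ j * SchwartzMap.seminorm ℂ a (b - j) f * ‖L‖ ^ j := by ring
    _ ≤ _ := by gcongr

end Modulation

section IntegerFrequencies

variable {ι : Type*} [Fintype ι]

/-- The linear functional `x ↦ ∑ j, n j * x j` on `ℝ^ι` with integer coefficients. -/
noncomputable def freqCLM (n : ι → ℤ) : (ι → ℝ) →L[ℝ] ℝ :=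
  ∑ j, (n j : ℝ) • ContinuousLinearMap.proj j

theorem freqCLM_apply (n : ι → ℤ) (x : ι → ℝ) : freqCLM n x = ∑ j, n j * x j := by
  simp [freqCLM]

theorem norm_freqCLM_le (n : ι → ℤ) : ‖freqCLM n‖ ≤ Fintype.card ι * ‖n‖ := by
  refine (freqCLM n).opNorm_le_bound (by positivity) fun x => ?_
  rw [freqCLM_apply]
  calc ‖∑ j, n j * x j‖ ≤ ∑ _j : ι, ‖n‖ * ‖x‖ := norm_sum_le_of_le _ fun j _ => by
        rw [norm_mul]
        gcongr
        · exact norm_le_pi_norm n j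
        · exact norm_le_pi_norm x j
    _ = Fintype.card ι * ‖n‖ * ‖x‖ := by simp [mul_assoc]

theorem mFourier_coe (n : ι → ℤ) (x : ι → ℝ) :
    UnitAddTorus.mFourier n (fun j => (x j : UnitAddCircle)) = 𝐞 (freqCLM n x) := by
  simp only [UnitAddTorus.mFourier, ContinuousMap.coe_mk, fourier_coe_apply, freqCLM_apply,
    Real.fourierChar_apply, ← Complex.exp_sum]
  congr 1
  push_cast
  rw [Finset.mul_sum, Finset.sum_mul]
  exact Finset.sum_congr rfl fun j _ => by ring

theorem exists_seminorm_modulation_freqCLM_le {F : Type*} [NormedAddCommGroup F] [NormedSpace ℂ F]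
    (f : 𝓢(ι → ℝ, F)) (a b : ℕ) : ∃ C : ℝ, ∀ n : ι → ℤ,
      SchwartzMap.seminorm ℂ a b (modulation F (freqCLM n) f) ≤ C * (1 + ‖n‖) ^ b := by
  obtain ⟨C, hC, hbound⟩ := exists_seminorm_modulation_le f a b
  refine ⟨C * (1 + Fintype.card ι) ^ b, fun n => (hbound _).trans ?_⟩
  rw [mul_assoc, ← mul_pow]
  gcongr
  calc 1 + ‖freqCLM n‖ ≤ 1 + Fintype.card ι * ‖n‖ := by gcongr; exact norm_freqCLM_le n
    _ ≤ (1 + Fintype.card ι) * (1 + ‖n‖) := by nlinarith [norm_nonneg n]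

theorem integral_fourierChar_freqCLM_smul {F : Type*} [NormedAddCommGroup F] [NormedSpace ℂ F]
    (n : ι → ℤ) (f : 𝓢(ι → ℝ, F)) :
    ∫ x, (𝐞 (freqCLM (-n) x) : ℂ) • f x =
      𝓕 (SchwartzMap.compCLMOfContinuousLinearEquiv ℂ (EuclideanSpace.equiv ι ℝ) f)
        (WithLp.toLp 2 fun j => (n j : ℝ)) := by
  rw [SchwartzMap.fourier_coe, Real.fourier_eq,
    ← (PiLp.volume_preserving_ofLp ι).integral_comp
      (MeasurableEquiv.toLp 2 (ι → ℝ)).symm.measurableEmbedding]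
  refine integral_congr_ae (Eventually.of_forall fun v => ?_)
  simp [Circle.smul_def, freqCLM_apply, PiLp.inner_apply]
  rfl

theorem exists_pow_mul_norm_integral_fourierChar_smul_le (f : 𝓢(ι → ℝ, ℂ)) (N : ℕ) :
    ∃ C : ℝ, ∀ n : ι → ℤ, (1 + ‖n‖) ^ N * ‖∫ x, (𝐞 (freqCLM (-n) x) : ℂ) • f x‖ ≤ C := by
  let f' := SchwartzMap.compCLMOfContinuousLinearEquiv ℂ (EuclideanSpace.equiv ι ℝ) f
  refine ⟨_, fun n => le_trans ?_ (SchwartzMap.one_add_le_sup_seminorm_apply (𝕜 := ℂ)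
    (m := (N, 0)) le_rfl le_rfl (𝓕 f') (WithLp.toLp 2 fun j => (n j : ℝ)))⟩
  rw [integral_fourierChar_freqCLM_smul, norm_iteratedFDeriv_zero]
  gcongr
  refine (pi_norm_le_iff_of_nonneg (norm_nonneg _)).2 fun j => ?_
  simpa [Int.norm_eq_abs] using PiLp.norm_apply_le (WithLp.toLp 2 fun j => (n j : ℝ)) j

variable (ι) in
theorem exists_summable_inv_one_add_norm_pow :
    ∃ N : ℕ, Summable fun n : ι → ℤ => ((1 + ‖n‖) ^ N)⁻¹ := by
  let L : Submodule ℤ (ι → ℝ) := Submodule.span ℤ (Set.range (Pi.basisFun ℝ ι))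
  have hmem (n : ι → ℤ) : (fun j => (n j : ℝ)) ∈ L :=
    ((Pi.basisFun ℝ ι).mem_span_iff_repr_mem ℤ _).2 fun j => ⟨n j, by simp⟩
  have hinj : Function.Injective fun n : ι → ℤ => (⟨_, hmem n⟩ : L) := fun n m h =>
    funext fun j => by simpa using congrFun (congrArg Subtype.val h) j
  refine ⟨Module.finrank ℤ L + 1, .of_norm_bounded_eventually
    ((ZLattice.summable_norm_pow_inv L _ (Nat.lt_succ_self _)).comp_injective hinj) ?_⟩
  filter_upwards [(Set.finite_singleton (0 : ι → ℤ)).compl_mem_cofinite] with n hn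
  have hpos : 0 < ‖(⟨_, hmem n⟩ : L)‖ :=
    norm_pos_iff.2 fun h0 => hn (hinj (h0.trans (by ext; simp)))
  have hle : ‖(⟨_, hmem n⟩ : L)‖ ≤ ‖n‖ :=
    (pi_norm_le_iff_of_nonneg (norm_nonneg n)).2 fun j => norm_le_pi_norm n j
  rw [Real.norm_of_nonneg (by positivity), Function.comp_apply, inv_pow]
  gcongr
  linarith

theorem summable_norm_mul_pow_of_rapidDecay {E : Type*} [SeminormedAddCommGroup E]
    {c : (ι → ℤ) → E} (hc : ∀ N : ℕ, ∃ C : ℝ, ∀ n, (1 + ‖n‖) ^ N * ‖c n‖ ≤ C) (b : ℕ) :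
    Summable fun n => ‖c n‖ * (1 + ‖n‖) ^ b := by
  obtain ⟨N, hN⟩ := exists_summable_inv_one_add_norm_pow ι
  obtain ⟨C, hC⟩ := hc (N + b)
  refine .of_nonneg_of_le (fun n => by positivity) (fun n => ?_) (hN.mul_left C)
  rw [← div_eq_mul_inv, le_div_iff₀ (by positivity)]
  calc ‖c n‖ * (1 + ‖n‖) ^ b * (1 + ‖n‖) ^ N = (1 + ‖n‖) ^ (N + b) * ‖c n‖ := by ring
    _ ≤ C := hC n

end IntegerFrequencies

/-! ### Fourier series of functions supported in the unit cube -/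

section FourierSeries

variable {ι : Type*}

theorem abs_eq_half_of_coe_unitAddCircle_eq {x y : ℝ} (hx : |x| ≤ 1 / 2) (hy : |y| ≤ 1 / 2)
    (hxy : (x : UnitAddCircle) = y) (hne : x ≠ y) : |x| = 1 / 2 := by
  have hnorm : |x| = |y| := by
    rw [← (AddCircle.norm_coe_eq_abs_iff (1 : ℝ) one_ne_zero).2 (by simpa using hx),
      ← (AddCircle.norm_coe_eq_abs_iff (1 : ℝ) one_ne_zero).2 (by simpa using hy), hxy]
  by_contra hx'
  have hx_lt := abs_lt.1 (hx.lt_of_ne hx')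
  have hy_lt := abs_lt.1 (hnorm ▸ hx.lt_of_ne hx')
  refine hne ((AddCircle.coe_eq_coe_iff_of_mem_Ico (p := (1 : ℝ)) (a := -1 / 2) ?_ ?_).1 hxy) <;>
    constructor <;> linarith

theorem exists_continuousMap_unitAddTorus {X : Type*} [TopologicalSpace X] [Zero X]
    {f : (ι → ℝ) → X} (hf : Continuous f) (hsupp : ∀ x, f x ≠ 0 → ∀ j, |x j| < 1 / 2) :
    ∃ g : C(UnitAddTorus ι, X), ∀ x : ι → ℝ, (∀ j, |x j| ≤ 1 / 2) →
      g (fun j => (x j : UnitAddCircle)) = f x := by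
  let K : Set (ι → ℝ) := Set.univ.pi fun _ => Metric.closedBall 0 (1 / 2)
  have hK (x : ι → ℝ) : x ∈ K ↔ ∀ j, |x j| ≤ 1 / 2 := by
    simp [K, Set.mem_pi]
  have : CompactSpace K :=
    isCompact_iff_compactSpace.1 (isCompact_univ_pi fun _ => isCompact_closedBall 0 (1 / 2))
  let q (x : K) : UnitAddTorus ι := fun j => (x.1 j : UnitAddCircle)
  have hq : Continuous q := continuous_pi fun j =>
    (AddCircle.continuous_mk' 1).comp ((continuous_apply j).comp continuous_subtype_val)
  have hsurj : Function.Surjective q := fun t => by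
    choose y hy hyt using fun j => (AddCircle.coe_image_Icc_eq (1 : ℝ) (-1 / 2)).ge
      (Set.mem_univ (t j))
    refine ⟨⟨y, (hK y).2 fun j => abs_le.2 ?_⟩, funext hyt⟩
    constructor <;> linarith [(hy j).1, (hy j).2]
  have hquot : IsQuotientMap q := .of_surjective_continuous hsurj hq
  have hfactor : Function.FactorsThrough (fun x : K => f x) q := fun x y hxy => by
    by_cases hne : x.1 = y.1
    · exact congrArg f hne
    obtain ⟨j, hj⟩ := Function.ne_iff.1 hne
    have hfx {z w : K} (hzw : q z = q w) (hj : z.1 j ≠ w.1 j) : f z = 0 := by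
      by_contra h0
      exact (hsupp z h0 j).ne (abs_eq_half_of_coe_unitAddCircle_eq ((hK z).1 z.2 j)
        ((hK w).1 w.2 j) (congrFun hzw j) hj)
    exact (hfx hxy hj).trans (hfx hxy.symm hj.symm).symm
  let fK : C(K, X) := ⟨fun x => f x, hf.comp continuous_subtype_val⟩
  have hquot' : IsQuotientMap (⟨q, hq⟩ : C(K, UnitAddTorus ι)) := hquot
  exact ⟨hquot'.lift fK hfactor, fun x hx =>
    DFunLike.congr_fun (hquot'.lift_comp fK hfactor) ⟨x, (hK x).2 hx⟩⟩

variable [Fintype ι]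

theorem mFourierCoeff_eq_integral_fourierChar_smul {E : Type*} [NormedAddCommGroup E]
    [NormedSpace ℂ E] {f : (ι → ℝ) → E} {g : UnitAddTorus ι → E}
    (hsupp : ∀ x, f x ≠ 0 → ∀ j, |x j| < 1 / 2)
    (hg : ∀ x : ι → ℝ, (∀ j, |x j| ≤ 1 / 2) → g (fun j => (x j : UnitAddCircle)) = f x)
    (n : ι → ℤ) :
    UnitAddTorus.mFourierCoeff g n = ∫ x, (𝐞 (freqCLM (-n) x) : ℂ) • f x := by
  let Q : Set (ι → ℝ) := {x | ∀ j, x j ∈ Set.Ioc (-1 / 2 : ℝ) (-1 / 2 + 1)}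
  have hQ : MeasurableSet Q := .univ_pi' fun _ => measurableSet_Ioc
  have hzero : ∀ x ∉ Q, (𝐞 (freqCLM (-n) x) : ℂ) • f x = 0 := fun x hx => by
    by_contra h0
    refine hx fun j => ?_
    have := abs_lt.1 (hsupp x (right_ne_zero_of_smul h0) j)
    constructor <;> linarith
  rw [UnitAddTorus.mFourierCoeff_eq_integral _ _ fun _ => (-1 / 2 : ℝ),
    ← setIntegral_eq_integral_of_forall_compl_eq_zero hzero]
  refine setIntegral_congr_fun hQ fun x hx => ?_
  have hx_le (j : ι) : |x j| ≤ 1 / 2 :=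
    abs_le.2 (by constructor <;> linarith [(hx j).1, (hx j).2])
  simp only [mFourier_coe, hg x hx_le]

/-- The periodic Fourier series of `f` equals `f` on the unit cube only; multiplying by `Φ` cuts
off the other periods. -/
theorem hasSum_integral_smul_modulation {f Φ : 𝓢(ι → ℝ, ℂ)}
    (hfsupp : ∀ x, f x ≠ 0 → ∀ j, |x j| < 1 / 2) (hΦsupp : ∀ x, Φ x ≠ 0 → ∀ j, |x j| < 1 / 2)
    (hΦ : ∀ x, f x ≠ 0 → Φ x = 1) :
    HasSum (fun n : ι → ℤ =>
      (∫ y, (𝐞 (freqCLM (-n) y) : ℂ) • f y) • modulation ℂ (freqCLM n) Φ) f := by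
  obtain ⟨g, hg⟩ := exists_continuousMap_unitAddTorus f.continuous hfsupp
  have hcoeff := mFourierCoeff_eq_integral_fourierChar_smul hfsupp hg
  simp only [← hcoeff]
  have hdecay (b : ℕ) : Summable fun n => ‖UnitAddTorus.mFourierCoeff g n‖ * (1 + ‖n‖) ^ b := by
    simp only [hcoeff]
    exact summable_norm_mul_pow_of_rapidDecay
      (exists_pow_mul_norm_integral_fourierChar_smul_le f) b
  have hsummable : Summable (UnitAddTorus.mFourierCoeff g) := .of_norm (by simpa using hdecay 0)
  refine hasSum_of_summable_seminorm (𝕜 := ℂ) (fun x => ?_) fun a b => ?_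
  · have hgΦ : g (fun j => (x j : UnitAddCircle)) * Φ x = f x := by
      by_cases hx : Φ x = 0
      · have hfx : f x = 0 := by
          by_contra h0
          exact zero_ne_one (hx.symm.trans (hΦ x h0))
        rw [hx, hfx, mul_zero]
      · rw [hg x fun j => (hΦsupp x hx j).le]
        by_cases h0 : f x = 0
        · rw [h0, zero_mul]
        · rw [hΦ x h0, mul_one]
    have hseries := (UnitAddTorus.hasSum_mFourier_series_apply_of_summable hsummable
      fun j => (x j : UnitAddCircle)).mul_right (Φ x)
    rw [hgΦ] at hseries
    simpa [modulation_apply, mFourier_coe, mul_assoc] using hseries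
  · obtain ⟨C, hC⟩ := exists_seminorm_modulation_freqCLM_le Φ a b
    refine .of_nonneg_of_le (fun n => apply_nonneg _ _) (fun n => ?_) ((hdecay b).mul_left C)
    rw [map_smul_eq_mul, mul_left_comm]
    exact mul_le_mul_of_nonneg_left (hC n) (norm_nonneg _)

end FourierSeries

/-! ### Density of compactly supported tensors -/

section Density

theorem IsTensor.modulation {k : ℕ} {f : Fin k → 𝓢(ℝ, ℂ)} {F : 𝓢(Fin k → ℝ, ℂ)}
    (hF : IsTensor f F) (n : Fin k → ℤ) :
    IsTensor (fun j => modulation ℂ ((n j : ℝ) • ContinuousLinearMap.id ℝ ℝ) (f j))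
      (modulation ℂ (freqCLM n) F) := fun x => by
  have hchar : (𝐞 (freqCLM n x) : ℂ) = ∏ j, (𝐞 (n j * x j) : ℂ) := by
    simp only [freqCLM_apply, Real.fourierChar_apply, ← Complex.exp_sum, Finset.mul_sum,
      Finset.sum_mul, Complex.ofReal_sum]
  simp only [modulation_apply, hchar, hF x, smul_eq_mul, ← Finset.prod_mul_distrib]
  rfl

theorem IsTensor.compCLM_smulLeft {k : ℕ} {f : Fin k → 𝓢(ℝ, ℂ)} {F : 𝓢(Fin k → ℝ, ℂ)}
    (hF : IsTensor f F) (r : ℝˣ) :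
    IsTensor (fun j => compCLMOfContinuousLinearEquiv ℂ (ContinuousLinearEquiv.smulLeft r) (f j))
      (compCLMOfContinuousLinearEquiv ℂ (ContinuousLinearEquiv.smulLeft r) F) :=
  fun _ => hF _

theorem exists_isTensor {k : ℕ} {f : Fin k → 𝓢(ℝ, ℂ)} (hf : ∀ m, HasCompactSupport (f m)) :
    ∃ F, IsTensor f F := by
  have hsupp : HasCompactSupport fun x : Fin k → ℝ => ∏ m, f m (x m) :=
    .of_support_subset_isCompact (isCompact_univ_pi fun m => (hf m).isCompact) fun _ hx m _ =>
      subset_tsupport _ (Finset.prod_ne_zero_iff.1 hx m (Finset.mem_univ m))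
  have hsmooth : ContDiff ℝ ∞ fun x : Fin k → ℝ => ∏ m, f m (x m) :=
    contDiff_prod fun m _ => ((f m).smooth ⊤).comp (contDiff_apply ℝ ℝ m)
  exact ⟨hsupp.toSchwartzMap hsmooth, fun _ => rfl⟩

theorem exists_schwartzMap_bump {E : Type*} [NormedAddCommGroup E] [NormedSpace ℝ E]
    [FiniteDimensional ℝ E] {r R : ℝ} (hr : 0 < r) (hrR : r < R) :
    ∃ χ : 𝓢(E, ℂ), HasCompactSupport χ ∧ (∀ x, ‖x‖ ≤ r → χ x = 1) ∧ ∀ x, χ x ≠ 0 → ‖x‖ < R := by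
  let b : ContDiffBump (0 : E) := ⟨r, R, hr, hrR⟩
  have hsupp : HasCompactSupport fun x => (b x : ℂ) :=
    b.hasCompactSupport.comp_left (g := fun t : ℝ => (t : ℂ)) Complex.ofReal_zero
  refine ⟨hsupp.toSchwartzMap (Complex.ofRealCLM.contDiff.comp b.contDiff), hsupp,
    fun x hx => ?_, fun x hx => ?_⟩
  · exact Complex.ofReal_eq_one.2 (b.one_of_mem_closedBall (mem_closedBall_zero_iff.2 hx))
  · by_contra! hge
    exact hx (Complex.ofReal_eq_zero.2 (b.zero_of_le_dist (hge.trans_eq (dist_zero_right x).symm)))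

/-- The pure tensors `f₁ ⊗ ⋯ ⊗ f_k` with compactly supported factors. Compact support makes every
tensor product of a subfamily available as a Schwartz function through `exists_isTensor`. -/
def compactTensors (k : ℕ) : Set 𝓢(Fin k → ℝ, ℂ) :=
  {F | ∃ f, (∀ m, HasCompactSupport (f m)) ∧ IsTensor f F}

theorem mem_closure_span_compactTensors_of_abs_le {k : ℕ} {f : 𝓢(Fin k → ℝ, ℂ)}
    (hf : ∀ x, f x ≠ 0 → ∀ j, |x j| ≤ 1 / 4) :
    f ∈ closure (Submodule.span ℂ (compactTensors k) : Set 𝓢(Fin k → ℝ, ℂ)) := by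
  obtain ⟨χ, hχ, hχ_one, hχ_lt⟩ :=
    exists_schwartzMap_bump (E := ℝ) (r := 1 / 4) (R := 1 / 2) (by norm_num) (by norm_num)
  obtain ⟨Φ, hΦ⟩ := exists_isTensor fun _ : Fin k => hχ
  have hΦ_lt (x : Fin k → ℝ) (hx : Φ x ≠ 0) (j : Fin k) : |x j| < 1 / 2 :=
    hχ_lt _ (Finset.prod_ne_zero_iff.1 (hΦ x ▸ hx) j (Finset.mem_univ j))
  have hΦ_one (x : Fin k → ℝ) (hx : f x ≠ 0) : Φ x = 1 := by
    rw [hΦ, Finset.prod_eq_one fun j _ => hχ_one _ (hf x hx j)]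
  have hmem (n : Fin k → ℤ) : modulation ℂ (freqCLM n) Φ ∈ compactTensors k :=
    ⟨_, fun _ => hasCompactSupport_modulation _ hχ, hΦ.modulation n⟩
  refine mem_closure_of_tendsto (hasSum_integral_smul_modulation
    (fun x hx j => (hf x hx j).trans_lt (by norm_num)) hΦ_lt hΦ_one) (.of_forall fun s => ?_)
  exact sum_mem fun n _ => Submodule.smul_mem _ _ (Submodule.subset_span (hmem n))

theorem compCLM_smulLeft_mem_compactTensors {k : ℕ} (r : ℝˣ) {F : 𝓢(Fin k → ℝ, ℂ)}
    (hF : F ∈ compactTensors k) :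
    compCLMOfContinuousLinearEquiv ℂ (ContinuousLinearEquiv.smulLeft r) F ∈ compactTensors k := by
  obtain ⟨f, hf, hF⟩ := hF
  let D : ℝ ≃L[ℝ] ℝ := ContinuousLinearEquiv.smulLeft r
  exact ⟨fun m => compCLMOfContinuousLinearEquiv ℂ D (f m),
    fun m => (hf m).comp_homeomorph D.toHomeomorph, hF.compCLM_smulLeft r⟩

theorem compCLM_smulLeft_mem_span_compactTensors {k : ℕ} (r : ℝˣ) {F : 𝓢(Fin k → ℝ, ℂ)}
    (hF : F ∈ Submodule.span ℂ (compactTensors k)) :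
    compCLMOfContinuousLinearEquiv ℂ (ContinuousLinearEquiv.smulLeft r) F ∈
      Submodule.span ℂ (compactTensors k) := by
  induction hF using Submodule.span_induction with
  | mem F hF => exact Submodule.subset_span (compCLM_smulLeft_mem_compactTensors r hF)
  | zero => rw [map_zero]; exact Submodule.zero_mem _
  | add F G _ _ hF hG => rw [map_add]; exact Submodule.add_mem _ hF hG
  | smul c F _ hF => rw [map_smul]; exact Submodule.smul_mem _ c hF

theorem dense_span_compactTensors (k : ℕ) :
    Dense (Submodule.span ℂ (compactTensors k) : Set 𝓢(Fin k → ℝ, ℂ)) := by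
  refine .of_closure ((dense_hasCompactSupport (E := Fin k → ℝ) (F := ℂ)).mono fun f hf => ?_)
  obtain ⟨R, hR0, hR⟩ := HasCompactSupport.isCompact hf |>.isBounded.exists_pos_norm_le
  let r : ℝˣ := Units.mk0 (4 * R) (by positivity)
  let D (s : ℝˣ) : 𝓢(Fin k → ℝ, ℂ) →L[ℂ] 𝓢(Fin k → ℝ, ℂ) :=
    compCLMOfContinuousLinearEquiv ℂ (ContinuousLinearEquiv.smulLeft s)
  have hDf (x : Fin k → ℝ) (hx : D r f x ≠ 0) (j : Fin k) : |x j| ≤ 1 / 4 := by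
    have hxR : |4 * R * x j| ≤ R :=
      (norm_le_pi_norm (r • x) j).trans (hR _ (subset_tsupport _ hx))
    rw [abs_mul, abs_of_pos (by positivity)] at hxR
    nlinarith
  have hDD : D r⁻¹ (D r f) = f := by
    ext x
    exact congrArg f (smul_inv_smul r x)
  rw [← hDD]
  exact map_mem_closure (D r⁻¹).continuous (mem_closure_span_compactTensors_of_abs_le hDf)
    fun _ => compCLM_smulLeft_mem_span_compactTensors r⁻¹

end Density

/-! ### Uniqueness and conjugation of extensions -/

section Extension

variable {i k : ℕ} {A : DVO i} {ℓ : Fin i → Fin k} {E E' : DVO k}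

theorem IsExtension.unique (hE : IsExtension i k A ℓ E) (hE' : IsExtension i k A ℓ E') :
    E = E' := by
  refine ContinuousLinearMap.ext_on (dense_span_compactTensors k) ?_
  rintro F ⟨f, hf, hF⟩
  refine ContinuousLinearMap.ext_on (dense_span_compactTensors k) ?_
  rintro G ⟨g, hg, hG⟩
  obtain ⟨F', hF'⟩ := exists_isTensor fun a => hf (ℓ a)
  obtain ⟨G', hG'⟩ := exists_isTensor fun a => hg (ℓ a)
  rw [hE f g F G F' G' hF hG hF' hG', hE' f g F G F' G' hF hG hF' hG']

theorem IsTensor.permCLM_inv {f : Fin k → 𝓢(ℝ, ℂ)} {F : 𝓢(Fin k → ℝ, ℂ)} (hF : IsTensor f F)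
    (π : Equiv.Perm (Fin k)) : IsTensor (fun m => f (π m)) (permCLM k π⁻¹ F) := fun x => by
  have hperm : permCLM k π⁻¹ F x = F fun m => x (π⁻¹ m) := rfl
  rw [hperm, hF, ← Equiv.prod_comp π]
  exact Finset.prod_congr rfl fun m _ => congrArg (fun a => f (π m) (x a)) (π.symm_apply_apply m)

/-- The conjugate `π ∘ E ∘ π⁻¹`, where `π` acts on `𝓢'(ℝ^k)` as the transpose of the action of
`π⁻¹` on `𝓢(ℝ^k)`. -/
noncomputable def permConj (π : Equiv.Perm (Fin k)) (E : DVO k) : DVO k :=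
  (ContinuousLinearMap.precomp ℂ (permCLM k π⁻¹)).comp (E.comp (permCLM k π⁻¹))

theorem permConj_apply (π : Equiv.Perm (Fin k)) (E : DVO k) (f g : 𝓢(Fin k → ℝ, ℂ)) :
    permConj π E f g = E (permCLM k π⁻¹ f) (permCLM k π⁻¹ g) :=
  rfl

theorem IsExtension.permConj (hE : IsExtension i k A ℓ E) (π : Equiv.Perm (Fin k)) :
    IsExtension i k A (π ∘ ℓ) (permConj π E) := by
  intro f g F G F' G' hF hG hF' hG'
  have hcompl : (Finset.univ \ Finset.univ.image ℓ).map π.toEmbedding =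
      Finset.univ \ Finset.univ.image (π ∘ ℓ) := by
    simp [Finset.map_eq_image, Finset.image_sdiff _ _ π.injective, Finset.image_image,
      Finset.image_univ_equiv]
  rw [permConj_apply, hE _ _ _ _ F' G' (hF.permCLM_inv π) (hG.permCLM_inv π) hF' hG', ← hcompl,
    Finset.prod_map]
  rfl

end Extension

/-- Conjugating the `k`-particle extension `A_{(ℓ)}` by a permutation `π ∈ S_k` yields the
extension `A_{(π∘ℓ)}` associated with the injection `π ∘ ℓ`:
`π ∘ A_{(ℓ)} ∘ π⁻¹ = A_{(π∘ℓ)}`.  Here `(π ∘ A_{(ℓ)} ∘ π⁻¹) f (g) = A_{(ℓ)} (π⁻¹·f) (π⁻¹·g)`,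
with permutations acting on Schwartz functions by `(π·f)(x₁,…,x_k) = f(x_{π(1)},…,x_{π(k)})` and
on tempered distributions by `(π·u)(g) = u(π⁻¹·g)`. -/
theorem perm_conj_extension (i k : ℕ) (hi : 0 < i) (hik : i ≤ k)
    (A : DVO i) (ℓ : Fin i → Fin k) (hℓ : Function.Injective ℓ) (π : Equiv.Perm (Fin k))
    (E E' : DVO k) (hE : IsExtension i k A ℓ E) (hE' : IsExtension i k A (π ∘ ℓ) E') :
    ∀ f g : SchwartzMap (Fin k → ℝ) ℂ,
      E (permCLM k π⁻¹ f) (permCLM k π⁻¹ g) = E' f g := by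
  intro f g
  rw [← permConj_apply, (hE.permConj π).unique hE']
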